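/- Let T>0, E a separable Banach space, V a Banach space densely and continuously embedded in E, and {A(t)}_{t∈[0,T]} a family of linear operators on E satisfying (Hyp'1) with constant ω>0 and (Hyp2)–(Hyp5). Let F:[0,T]×E→E be a completely continuous map (continuous and mapping bounded sets into relatively compact sets) satisfying (F1), (F2) and (F4). Let {F_∞(t)}_{t∈[0,T]} be a family of compact bounded linear operators on E such that t↦F_∞(t)∈L(E,E) is continuous, F_∞(0)=F_∞(T), and lim_{‖x‖→∞} ‖F(t,x) − F_∞(t)x‖/‖x‖ = 0 uniformly with respect to t∈[0,T]. Let Â be the closure of A_0 := (1/T)∫_0^T A(τ)dτ (with domain V) and F̂_∞ := (1/T)∫_0^T F_∞(τ)dτ. If for every λ∈(0,1] the linear periodic problem u'(t)=λ(A(t)+F_∞(t))u(t) on [0,T], u(0)=u(T), has no nontrivial mild solution, and Ker(Â + F̂_∞) = {0}, then the equation u'(t)=A(t)u(t)+F(t,u(t)) admits a mild solution u:[0,T]→E with u(0)=u(T). -/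

import Mathlib

open Filter Topology Set MeasureTheory

noncomputable section

variable {E : Type*} [NormedAddCommGroup E] [NormedSpace ℝ E]

/-- A C₀ semigroup of bounded linear operators on `E`. -/
structure IsC0Semigroup (S : ℝ → E →L[ℝ] E) : Prop where
  map_zero : S 0 = 1
  map_add : ∀ ⦃t s : ℝ⦄, 0 ≤ t → 0 ≤ s → S (t + s) = (S t).comp (S s)
  strong_cont : ∀ x : E, ContinuousOn (fun t => S t x) (Ici (0 : ℝ))

/-- `y` is the limit of `t⁻¹ • (S t x - x)` as `t → 0⁺`. -/
def GenLimitAt (S : ℝ → E →L[ℝ] E) (x y : E) : Prop :=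
  Tendsto (fun t : ℝ => t⁻¹ • (S t x - x)) (𝓝[>] (0 : ℝ)) (𝓝 y)

/-- The (unbounded) operator with domain `D` and action `A` is the generator of `S`. -/
def IsGeneratorOf (D : Set E) (A : E → E) (S : ℝ → E →L[ℝ] E) : Prop :=
  (∀ x, x ∈ D ↔ ∃ y, GenLimitAt S x y) ∧ ∀ x ∈ D, GenLimitAt S x (A x)

/-- Graph of an operator with domain `D` and action `A`. -/
def opGraph (D : Set E) (A : E → E) : Set (E × E) := {p | p.1 ∈ D ∧ p.2 = A p.1}

/-- The operator `(D, A)` is closable: the closure of its graph is a graph of a function. -/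
def IsClosableOp (D : Set E) (A : E → E) : Prop :=
  ∀ x y₁ y₂, (x, y₁) ∈ closure (opGraph D A) → (x, y₂) ∈ closure (opGraph D A) → y₁ = y₂

/-- `(D', A')` is the closure of the operator `(D, A)`. -/
def IsClosureOf (D' : Set E) (A' : E → E) (D : Set E) (A : E → E) : Prop :=
  (∀ x, x ∈ D' ↔ ∃ y, (x, y) ∈ closure (opGraph D A)) ∧
  ∀ x ∈ D', (x, A' x) ∈ closure (opGraph D A)

/-- `(D, A)` is a linear operator (its domain is a subspace on which it acts linearly). -/
def IsLinearOp (D : Set E) (A : E → E) : Prop :=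
  (0 : E) ∈ D ∧
  (∀ x ∈ D, ∀ y ∈ D, x + y ∈ D ∧ A (x + y) = A x + A y) ∧
  (∀ (c : ℝ), ∀ x ∈ D, c • x ∈ D ∧ A (c • x) = c • A x)

/-- An evolution system `{R(t,s)}_{0 ≤ s ≤ t ≤ T}` on `E`. -/
structure IsEvolutionSystem (T : ℝ) (R : ℝ → ℝ → E →L[ℝ] E) : Prop where
  refl : ∀ t ∈ Icc (0 : ℝ) T, R t t = 1
  comp : ∀ ⦃s r t : ℝ⦄, 0 ≤ s → s ≤ r → r ≤ t → t ≤ T → R t s = (R t r).comp (R r s)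
  strong_cont : ∀ x : E, ContinuousOn (fun p : ℝ × ℝ => R p.1 p.2 x)
    {p : ℝ × ℝ | 0 ≤ p.2 ∧ p.2 ≤ p.1 ∧ p.1 ≤ T}

/-- The parameter domain `{(t,s) : 0 ≤ s ≤ t ≤ T}` of an evolution system. -/
def evolDomain (T : ℝ) : Set (ℝ × ℝ) := {p : ℝ × ℝ | 0 ≤ p.2 ∧ p.2 ≤ p.1 ∧ p.1 ≤ T}

/-- A family `{R^{(λ)}}_{λ∈[0,1]}` of evolution systems is continuous: for every `x ∈ E`
and every sequence `λₙ → λ₀` in `[0,1]`, `R^{(λₙ)}(t,s)x → R^{(λ₀)}(t,s)x` uniformly in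
`0 ≤ s ≤ t ≤ T`. -/
def IsContinuousEvolFamily (T : ℝ) (R : ℝ → ℝ → ℝ → E →L[ℝ] E) : Prop :=
  ∀ (x : E) (l : ℕ → ℝ) (l0 : ℝ), (∀ n, l n ∈ Icc (0 : ℝ) 1) → l0 ∈ Icc (0 : ℝ) 1 →
    Tendsto l atTop (𝓝 l0) →
    TendstoUniformlyOn (fun n p => R (l n) p.1 p.2 x) (fun p => R l0 p.1 p.2 x)
      atTop (evolDomain T)

/-- The map `Σ(x,w,λ)(t) = R^{(λ)}(t,0)x + ∫₀ᵗ R^{(λ)}(t,s) w(s) ds`. -/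
def evolMap (R : ℝ → ℝ → E →L[ℝ] E) (x : E) (w : ℝ → E) (t : ℝ) : E :=
  R t 0 x + ∫ s in (0 : ℝ)..t, R t s (w s)

/-- The Hausdorff measure of noncompactness of a set `Q`. -/
def hausdorffMNC (Q : Set E) : ℝ :=
  sInf {r : ℝ | 0 < r ∧ ∃ c : Finset E, Q ⊆ ⋃ y ∈ c, Metric.ball y r}

variable {V : Type*} [NormedAddCommGroup V] [NormedSpace ℝ V]

/-- The data of a time-dependent family `{A(t)}` of (unbounded) linear operators on `E`:
domains `dom t`, actions `op t`, the C₀ semigroups `sg t = S_{A(t)}`, and the bounded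
operators `bdd t ∈ L(V,E)` obtained by restricting `A(t)` to `V` (via the embedding `ι`). -/
structure HypData (E V : Type*) [NormedAddCommGroup E] [NormedSpace ℝ E]
    [NormedAddCommGroup V] [NormedSpace ℝ V] where
  dom : ℝ → Set E
  op : ℝ → E → E
  sg : ℝ → ℝ → E →L[ℝ] E
  bdd : ℝ → V →L[ℝ] E

/-- Each `A(t)`, `t ∈ [0,T]`, generates the C₀ semigroup `sg t`. -/
def HypGen (T : ℝ) (A : HypData E V) : Prop :=
  ∀ t ∈ Icc (0 : ℝ) T, IsC0Semigroup (A.sg t) ∧ IsGeneratorOf (A.dom t) (A.op t) (A.sg t)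

/-- Stability of a family of semigroups: for `0 ≤ t₁ ≤ ⋯ ≤ tₙ ≤ T`, `sᵢ ≥ 0`,
`‖S(t₁)(s₁)⋯S(tₙ)(sₙ)‖ ≤ M e^{ω(s₁+⋯+sₙ)}`. -/
def StableFamily {F : Type*} [NormedRing F] (T : ℝ) (S : ℝ → ℝ → F) (M ω : ℝ) : Prop :=
  ∀ (n : ℕ) (ts ss : Fin n → ℝ), Monotone ts → (∀ i, ts i ∈ Icc (0 : ℝ) T) →
    (∀ i, 0 ≤ ss i) →
    ‖(List.ofFn fun i => S (ts i) (ss i)).prod‖ ≤ M * Real.exp (ω * ∑ i, ss i)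

/-- Condition (Hyp'1): stability with `M = 1` and exponent `−ω`, `ω > 0`. -/
def Hyp1' (T : ℝ) (A : HypData E V) (ω : ℝ) : Prop :=
  0 < ω ∧ StableFamily T A.sg 1 (-ω)

/-- Condition (Hyp1): stability with constants `M ≥ 1`, `ω ∈ ℝ`. -/
def Hyp1 (T : ℝ) (A : HypData E V) (M ω : ℝ) : Prop :=
  1 ≤ M ∧ StableFamily T A.sg M ω

variable (ι : V →L[ℝ] E)

/-- Condition (Hyp2): `V` is `A(t)`-admissible for each `t` and the family of parts of the
`A(t)` in `V` is stable with constants `M_V`, `ω_V`. -/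
def Hyp2 (T : ℝ) (A : HypData E V) (MV ωV : ℝ) : Prop :=
  ∃ SV : ℝ → ℝ → V →L[ℝ] V,
    (∀ t ∈ Icc (0 : ℝ) T, IsC0Semigroup (SV t)) ∧
    (∀ t ∈ Icc (0 : ℝ) T, ∀ s ≥ (0 : ℝ), ∀ v : V, ι (SV t s v) = A.sg t s (ι v)) ∧
    1 ≤ MV ∧ StableFamily T SV MV ωV

/-- Condition (Hyp3): `V ⊆ D(A(t))`, `A(t)|_V = bdd t ∈ L(V,E)`, and `t ↦ bdd t` is
norm-continuous on `[0,T]`. -/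
def Hyp3 (T : ℝ) (A : HypData E V) : Prop :=
  (∀ t ∈ Icc (0 : ℝ) T, ∀ v : V, ι v ∈ A.dom t ∧ A.op t (ι v) = A.bdd t v) ∧
  ContinuousOn A.bdd (Icc (0 : ℝ) T)

/-- The time average `A₀ = (1/T)∫₀ᵀ A(τ) dτ ∈ L(V,E)`. -/
def timeAvg (T : ℝ) (A : HypData E V) : V →L[ℝ] E :=
  (1 / T) • ∫ τ in (0 : ℝ)..T, A.bdd τ

/-- Condition (Hyp4): there is `μ₀ > −ω` such that `(μ₀ I − A₀)V` is dense in `E`. -/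
def Hyp4 (T : ℝ) (A : HypData E V) (ω : ℝ) : Prop :=
  ∃ μ0 : ℝ, -ω < μ0 ∧ Dense (Set.range fun v : V => μ0 • ι v - timeAvg T A v)

/-- Condition (Hyp5): `A(0) = A(T)` (equal domains and actions). -/
def Hyp5 (T : ℝ) (A : HypData E V) : Prop :=
  A.dom 0 = A.dom T ∧ ∀ x ∈ A.dom 0, A.op 0 x = A.op T x

/-- `R` is the evolution system determined by the family with restrictions `Abdd t ∈ L(V,E)`:
it is an evolution system satisfying the norm bound `‖R(t,s)‖ ≤ M e^{ω(t−s)}`, with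
`(∂⁺/∂t)R(t,s)v|_{t=s} = A(s)v` and `(∂/∂s)R(t,s)v = −R(t,s)A(s)v` for `v ∈ V`. -/
def IsDeterminedEvolSystem (T : ℝ) (Abdd : ℝ → V →L[ℝ] E) (M ω : ℝ)
    (R : ℝ → ℝ → E →L[ℝ] E) : Prop :=
  IsEvolutionSystem T R ∧
  (∀ s t : ℝ, 0 ≤ s → s ≤ t → t ≤ T → ‖R t s‖ ≤ M * Real.exp (ω * (t - s))) ∧
  (∀ v : V, ∀ s ∈ Ico (0 : ℝ) T,
    HasDerivWithinAt (fun t => R t s (ι v)) (Abdd s v) (Ici s) s) ∧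
  (∀ v : V, ∀ s t : ℝ, 0 ≤ s → s ≤ t → t ≤ T →
    HasDerivWithinAt (fun r => R t r (ι v)) (-(R t s (Abdd s v))) (Icc (0 : ℝ) t) s)

/-!
A periodic mild solution of `u' = A(t)u + F(t,u)` is a fixed point of `u ↦ K(F(·,u))` on
`C([0,T],E)`, where `K` is the solution operator of the inhomogeneous problem `u' = A(t)u + w`,
`u(0)=u(T)`; it exists since `‖R(T,0)‖ ≤ e^{-ωT} < 1` makes `1 - R(T,0)` invertible. By
Arzelà–Ascoli `K` is compact on functions with values in a fixed compact set, so `u ↦ K(F(·,u))` is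
completely continuous and `L u = K(F_∞(·)u)` is a compact operator. The linear problem at `λ = 1`
has only the trivial solution, hence `1 - L` is invertible by the Fredholm alternative, and
asymptotic linearity makes `u ↦ (1 - L)⁻¹(K(F(·,u)) - L u)` send a large ball into itself.
Schauder's theorem gives a fixed point there, which is a fixed point of `u ↦ K(F(·,u))`. Brouwer's
theorem, from which Schauder's follows, is obtained by Milnor and Rogers' argument: if `g` is a
smooth retraction onto the sphere, the integral over the ball of the Jacobian determinant of
`x ↦ x + t(g(x) - x)` is polynomial in `t` and equals the volume of the ball for small `t`,
although it vanishes at `t = 1`.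
-/

section Determinant

theorem exists_polynomial_eval_eq_det_one_add_smul {K M : Type*} [CommRing K] [Nontrivial K]
    [AddCommGroup M] [Module K M] [Module.Free K M] [Module.Finite K M] (f : M →ₗ[K] M) :
    ∃ p : Polynomial K, p.natDegree ≤ Module.finrank K M ∧
      ∀ t : K, p.eval t = LinearMap.det (1 + t • f) := by
  classical
  let b := Module.finBasis K M
  let A := LinearMap.toMatrix b b f
  refine ⟨((Polynomial.X : Polynomial K) • A.map Polynomial.C
    + (1 : Matrix _ _ K).map Polynomial.C).det, ?_, fun t => ?_⟩
  · simpa only [Fintype.card_fin] using Polynomial.natDegree_det_X_add_C_le A 1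
  · rw [← Polynomial.coe_evalRingHom, RingHom.map_det, ← LinearMap.det_toMatrix b]
    congr 1
    ext i j
    by_cases hij : i = j <;> simp [A, hij, LinearMap.toMatrix_apply, add_comm, mul_comm t]

theorem exists_polynomial_eval_eq_integral {α 𝕜 : Type*} [RCLike 𝕜] [MeasurableSpace α]
    {μ : Measure α} {p : α → Polynomial 𝕜} {n : ℕ} (hdeg : ∀ x, (p x).natDegree ≤ n)
    (hint : ∀ t, Integrable (fun x => (p x).eval t) μ) :
    ∃ P : Polynomial 𝕜, ∀ t, P.eval t = ∫ x, (p x).eval t ∂μ := by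
  have hnodes : InjOn (fun i : ℕ => (i : 𝕜)) (Finset.range (n + 1)) := Nat.cast_injective.injOn
  let B (i : ℕ) := Lagrange.basis (Finset.range (n + 1)) (fun i : ℕ => (i : 𝕜)) i
  have hexpand (x : α) (t : 𝕜) :
      (p x).eval t = ∑ i ∈ Finset.range (n + 1), (p x).eval (i : 𝕜) * (B i).eval t := by
    have hlt : (p x).degree < (Finset.range (n + 1)).card := by
      rw [Finset.card_range]
      exact Polynomial.degree_le_natDegree.trans_lt
        (by exact_mod_cast Nat.lt_succ_of_le (hdeg x))
    conv_lhs => rw [Lagrange.eq_interpolate hnodes hlt, Lagrange.interpolate_apply]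
    simp only [Polynomial.eval_finsetSum, Polynomial.eval_mul, Polynomial.eval_C, B]
  refine ⟨∑ i ∈ Finset.range (n + 1), Polynomial.C (∫ x, (p x).eval (i : 𝕜) ∂μ) * B i,
    fun t => ?_⟩
  simp only [hexpand _ t, Polynomial.eval_finsetSum, Polynomial.eval_mul, Polynomial.eval_C]
  rw [integral_finsetSum (Finset.range (n + 1)) fun i _ => (hint i).mul_const _]
  simp only [integral_mul_const]

theorem integral_polynomial_eval_eq_of_infinite {α 𝕜 : Type*} [RCLike 𝕜] [MeasurableSpace α]
    {μ : Measure α} {p : α → Polynomial 𝕜} {n : ℕ} (hdeg : ∀ x, (p x).natDegree ≤ n)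
    (hint : ∀ t, Integrable (fun x => (p x).eval t) μ) {c : 𝕜}
    (hinf : {t | ∫ x, (p x).eval t ∂μ = c}.Infinite) (t : 𝕜) :
    ∫ x, (p x).eval t ∂μ = c := by
  obtain ⟨P, hP⟩ := exists_polynomial_eval_eq_integral hdeg hint
  have hconst : P = Polynomial.C c :=
    Polynomial.eq_of_infinite_eval_eq P _ (by simpa only [hP, Polynomial.eval_C] using hinf)
  rw [← hP, hconst, Polynomial.eval_C]

variable {W : Type*} [NormedAddCommGroup W] [NormedSpace ℝ W] [FiniteDimensional ℝ W]

theorem integral_det_one_add_smul_eq_of_infinite {α : Type*} [MeasurableSpace α] {μ : Measure α}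
    {D : α → W →L[ℝ] W} (hint : ∀ t : ℝ, Integrable (fun x => (1 + t • D x).det) μ) {c : ℝ}
    (hinf : {t : ℝ | ∫ x, (1 + t • D x).det ∂μ = c}.Infinite) (t : ℝ) :
    ∫ x, (1 + t • D x).det ∂μ = c := by
  choose p hdeg hp using fun x =>
    exists_polynomial_eval_eq_det_one_add_smul (D x : W →ₗ[ℝ] W)
  have hdet (x : α) (t : ℝ) : (1 + t • D x).det = (p x).eval t := (hp x t).symm
  simp only [hdet] at hint hinf ⊢
  exact integral_polynomial_eval_eq_of_infinite hdeg hint hinf t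

theorem isUnit_toLinearMap_iff_det_ne_zero {D : W →L[ℝ] W} :
    IsUnit (D : W →ₗ[ℝ] W) ↔ D.det ≠ 0 := by
  rw [LinearMap.isUnit_iff_isUnit_det, isUnit_iff_ne_zero, ContinuousLinearMap.det]

theorem det_one_add_pos_of_norm_lt_one {D : W →L[ℝ] W} (hD : ‖D‖ < 1) : 0 < (1 + D).det := by
  have hne : ∀ s ∈ Icc (0 : ℝ) 1, (1 + s • D).det ≠ 0 := by
    intro s hs
    have hnorm : ‖-(s • D)‖ < 1 := by
      rw [norm_neg, norm_smul, Real.norm_of_nonneg hs.1]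
      exact (mul_le_of_le_one_left (norm_nonneg D) hs.2).trans_lt hD
    have hunit : IsUnit (1 + s • D) := by
      simpa only [sub_neg_eq_add] using isUnit_one_sub_of_norm_lt_one hnorm
    exact isUnit_toLinearMap_iff_det_ne_zero.1
      (hunit.map (ContinuousLinearMap.toLinearMapRingHom : (W →L[ℝ] W) →+* (W →ₗ[ℝ] W)))
  have hcont : ContinuousOn (fun s : ℝ => (1 + s • D).det) (Icc 0 1) :=
    ContinuousLinearMap.continuous_det.comp_continuousOn (by fun_prop)
  by_contra hneg
  obtain ⟨s, hs, hs0⟩ := intermediate_value_Icc' zero_le_one hcont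
    (show (0 : ℝ) ∈ Icc (1 + (1 : ℝ) • D).det (1 + (0 : ℝ) • D).det from
      ⟨by simpa only [one_smul] using not_lt.1 hneg, by simp [ContinuousLinearMap.det]⟩)
  exact hne s hs hs0

end Determinant

section Retraction

theorem image_eq_of_mapsTo_compl {X Y : Type*} [TopologicalSpace X] [TopologicalSpace Y]
    [T2Space Y] {φ : X → Y} {s : Set X} {t : Set Y} (hs : IsCompact (closure s))
    (ht : IsPreconnected t) (hne : s.Nonempty) (hφ : ContinuousOn φ (closure s))
    (hopen : IsOpen (φ '' s)) (hmaps : MapsTo φ s t) (hbdry : MapsTo φ (closure s \ s) tᶜ) :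
    φ '' s = t := by
  refine hmaps.image_subset.antisymm (ht.subset_of_closure_inter_subset hopen ?_ ?_)
  · obtain ⟨x, hx⟩ := hne
    exact ⟨φ x, hmaps hx, mem_image_of_mem φ hx⟩
  · rintro y ⟨hy, hyt⟩
    obtain ⟨x, hx, rfl⟩ := closure_minimal (image_mono subset_closure)
      (hs.image_of_continuousOn hφ).isClosed hy
    exact ⟨x, by_contra fun hxs => hbdry ⟨hx, hxs⟩ hyt, rfl⟩

theorem injOn_add_of_lipschitz {W : Type*} [NormedAddCommGroup W] {s : Set W} {h : W → W} {k : ℝ}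
    (hk : k < 1) (hh : ∀ x ∈ s, ∀ y ∈ s, ‖h y - h x‖ ≤ k * ‖y - x‖) :
    InjOn (fun x => x + h x) s := by
  intro x hx y hy hxy
  have hdiff : y - x = -(h y - h x) := by
    rw [neg_sub, sub_eq_sub_iff_add_eq_add, add_comm (h x)]
    exact hxy.symm
  have hle : ‖y - x‖ ≤ k * ‖y - x‖ := by
    simpa only [hdiff, norm_neg] using hh x hx y hy
  have hzero : ‖y - x‖ = 0 := by nlinarith [norm_nonneg (y - x)]
  exact (sub_eq_zero.1 (norm_eq_zero.1 hzero)).symm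

theorem mapsTo_add_smul_sub_of_mapsTo_closure {W : Type*} [AddCommGroup W] [Module ℝ W]
    [TopologicalSpace W] [IsTopologicalAddGroup W] [ContinuousConstSMul ℝ W] {Ω : Set W}
    {r : W → W} (hΩ : IsOpen Ω) (hconv : Convex ℝ Ω) (hmaps : MapsTo r Ω (closure Ω)) {t : ℝ}
    (ht0 : 0 ≤ t) (ht1 : t < 1) : MapsTo (fun x => x + t • (r x - x)) Ω Ω := by
  intro x hx
  have hcomb : (1 - t) • x + t • r x ∈ interior Ω :=
    hconv.combo_interior_closure_mem_interior (hΩ.interior_eq.symm ▸ hx) (hmaps hx)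
      (sub_pos.2 ht1) ht0 (sub_add_cancel 1 t)
  rw [hΩ.interior_eq] at hcomb
  convert hcomb using 1
  module

variable {W : Type*} [NormedAddCommGroup W] [NormedSpace ℝ W] [FiniteDimensional ℝ W]

theorem isOpen_image_of_det_ne_zero {φ : W → W} {D : W → W →L[ℝ] W} {s : Set W} (hs : IsOpen s)
    (hφ : ∀ x ∈ s, HasStrictFDerivAt φ (D x) x) (hdet : ∀ x ∈ s, (D x).det ≠ 0) :
    IsOpen (φ '' s) := by
  rw [isOpen_iff_mem_nhds]
  rintro _ ⟨x, hx, rfl⟩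
  have hsurj : (D x).range = ⊤ :=
    (LinearMap.isUnit_iff_range_eq_top _).1 (isUnit_toLinearMap_iff_det_ne_zero.2 (hdet x hx))
  rw [← (hφ x hx).map_nhds_eq_of_surj hsurj]
  exact image_mem_map (hs.mem_nhds hx)

theorem integral_det_one_add_eq_measureReal [MeasurableSpace W] [BorelSpace W] (μ : Measure W)
    [μ.IsAddHaarMeasure] {Ω : Set W} {h : W → W} {D : W → W →L[ℝ] W} {k : ℝ} (hΩ : IsOpen Ω)
    (hconv : Convex ℝ Ω) (hbdd : Bornology.IsBounded Ω) (hk : k < 1)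
    (hD : ∀ x ∈ closure Ω, HasStrictFDerivAt h (D x) x) (hDk : ∀ x ∈ closure Ω, ‖D x‖ ≤ k)
    (hmaps : MapsTo (fun x => x + h x) Ω Ω) (hbdry : ∀ x ∈ closure Ω \ Ω, h x = 0) :
    ∫ x in Ω, (1 + D x).det ∂μ = μ.real Ω := by
  rcases Ω.eq_empty_or_nonempty with rfl | hne
  · simp
  have hφ (x) (hx : x ∈ closure Ω) : HasStrictFDerivAt (fun x => x + h x) (1 + D x) x :=
    (hasStrictFDerivAt_id x).add (hD x hx)
  have hdet (x) (hx : x ∈ closure Ω) : 0 < (1 + D x).det :=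
    det_one_add_pos_of_norm_lt_one ((hDk x hx).trans_lt hk)
  have hinj : InjOn (fun x => x + h x) (closure Ω) :=
    injOn_add_of_lipschitz hk fun x hx y hy =>
      hconv.closure.norm_image_sub_le_of_norm_hasFDerivWithin_le
        (fun z hz => (hD z hz).hasFDerivAt.hasFDerivWithinAt) hDk hx hy
  have himage : (fun x => x + h x) '' Ω = Ω :=
    image_eq_of_mapsTo_compl hbdd.isCompact_closure hconv.isPreconnected hne
      (fun x hx => (hφ x hx).hasFDerivAt.continuousAt.continuousWithinAt)
      (isOpen_image_of_det_ne_zero hΩ (fun x hx => hφ x (subset_closure hx))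
        fun x hx => (hdet x (subset_closure hx)).ne') hmaps
      fun x hx => by simpa only [hbdry x hx, add_zero, mem_compl_iff] using hx.2
  have hvolume := integral_image_eq_integral_abs_det_fderiv_smul μ hΩ.measurableSet
    (fun x hx => (hφ x (subset_closure hx)).hasFDerivAt.hasFDerivWithinAt)
    (hinj.mono subset_closure) (fun _ => (1 : ℝ))
  rw [himage] at hvolume
  simp only [integral_const, smul_eq_mul, mul_one, measureReal_restrict_apply_univ] at hvolume
  rw [hvolume]
  exact setIntegral_congr_fun hΩ.measurableSet fun x hx =>
    (abs_of_pos (hdet x (subset_closure hx))).symm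

theorem integral_det_fderiv_eq_measureReal [MeasurableSpace W] [BorelSpace W] (μ : Measure W)
    [μ.IsAddHaarMeasure] {Ω : Set W} {r : W → W} (hΩ : IsOpen Ω) (hconv : Convex ℝ Ω)
    (hbdd : Bornology.IsBounded Ω) (hr : ∀ x ∈ closure Ω, ContDiffAt ℝ 1 r x)
    (hmaps : MapsTo r Ω (closure Ω)) (hbdry : ∀ x ∈ closure Ω \ Ω, r x = x) :
    ∫ x in Ω, (fderiv ℝ r x).det ∂μ = μ.real Ω := by
  let D (x : W) : W →L[ℝ] W := fderiv ℝ r x - 1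
  have hD (x) (hx : x ∈ closure Ω) : HasStrictFDerivAt (fun x => r x - x) (D x) x :=
    ((hr x hx).hasStrictFDerivAt one_ne_zero).sub (hasStrictFDerivAt_id x)
  have hDcont : ContinuousOn D (closure Ω) := fun x hx =>
    (((hr x hx).fderiv_right (m := 0) le_rfl).continuousAt.sub
      continuousAt_const).continuousWithinAt
  obtain ⟨M, hM⟩ := hbdd.isCompact_closure.exists_bound_of_continuousOn hDcont
  have hint (t : ℝ) : IntegrableOn (fun x => (1 + t • D x).det) Ω μ :=
    (ContinuousOn.integrableOn_compact hbdd.isCompact_closure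
      (ContinuousLinearMap.continuous_det.comp_continuousOn (by fun_prop))).mono_set
      subset_closure
  -- For small `t` the map `x ↦ x + t (r x - x)` is a diffeomorphism of `Ω`; both sides being
  -- polynomials in `t`, the identity persists up to `t = 1`.
  have hsmall : ∀ t ∈ Ioo (0 : ℝ) (1 / (|M| + 1)),
      ∫ x in Ω, (1 + t • D x).det ∂μ = μ.real Ω := by
    intro t ht
    have htM : t * (|M| + 1) < 1 := (lt_div_iff₀ (by positivity)).1 ht.2
    have ht1 : t < 1 := by nlinarith [ht.1, abs_nonneg M]
    refine integral_det_one_add_eq_measureReal μ (h := fun x => t • (r x - x)) (k := t * |M|)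
      hΩ hconv hbdd (by linarith [ht.1]) (fun x hx => (hD x hx).const_smul t) ?_ ?_ ?_
    · intro x hx
      rw [norm_smul, Real.norm_of_nonneg ht.1.le]
      exact mul_le_mul_of_nonneg_left ((hM x hx).trans (le_abs_self M)) ht.1.le
    · exact mapsTo_add_smul_sub_of_mapsTo_closure hΩ hconv hmaps ht.1.le ht1
    · intro x hx
      rw [hbdry x hx, sub_self, smul_zero]
  have hone := integral_det_one_add_smul_eq_of_infinite hint
    ((Ioo_infinite (by positivity : (0 : ℝ) < 1 / (|M| + 1))).mono hsmall) 1
  simpa only [one_smul, D, add_sub_cancel] using hone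

end Retraction

section NoRetraction

variable {W : Type*} [NormedAddCommGroup W] [InnerProductSpace ℝ W] [FiniteDimensional ℝ W]

theorem det_eq_zero_of_eventually_norm_eq_one {r : W → W} {D : W →L[ℝ] W} {x : W}
    (hr : HasFDerivAt r D x) (hnorm : ∀ᶠ y in 𝓝 x, ‖r y‖ = 1) : D.det = 0 := by
  have hconst : HasFDerivAt (fun y => ‖r y‖ ^ 2) (0 : W →L[ℝ] ℝ) x :=
    (hasFDerivAt_const (1 : ℝ) x).congr_of_eventuallyEq
      (hnorm.mono fun y hy => by simp only [hy, one_pow])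
  by_contra hdet
  obtain ⟨w, hw⟩ : ∃ w, D w = r x := LinearMap.range_eq_top.1
    ((LinearMap.isUnit_iff_range_eq_top _).1 (isUnit_toLinearMap_iff_det_ne_zero.2 hdet)) (r x)
  have hinner := DFunLike.congr_fun (hr.norm_sq.unique hconst) w
  simp only [smul_apply, ContinuousLinearMap.comp_apply, hw,
    innerSL_apply_apply, real_inner_self_eq_norm_sq, hnorm.self_of_nhds] at hinner
  norm_num at hinner

theorem not_mapsTo_sphere_of_contDiffAt {r : W → W}
    (hr : ∀ x ∈ Metric.closedBall (0 : W) 1, ContDiffAt ℝ 1 r x)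
    (hid : EqOn r id (Metric.sphere 0 1)) :
    ¬ MapsTo r (Metric.closedBall 0 1) (Metric.sphere 0 1) := by
  intro hsphere
  borelize W
  have hclosure : closure (Metric.ball (0 : W) 1) = Metric.closedBall 0 1 :=
    closure_ball 0 one_ne_zero
  have hvol : ∫ x in Metric.ball 0 1, (fderiv ℝ r x).det =
      (volume : Measure W).real (Metric.ball 0 1) := by
    refine integral_det_fderiv_eq_measureReal volume Metric.isOpen_ball (convex_ball 0 1)
      Metric.isBounded_ball (hclosure ▸ hr) ?_ fun x hx => ?_
    · exact hclosure ▸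
        hsphere.mono Metric.ball_subset_closedBall Metric.sphere_subset_closedBall
    · rw [hclosure, Metric.closedBall_sdiff_ball] at hx
      exact hid hx
  have hzero : ∫ x in Metric.ball (0 : W) 1, (fderiv ℝ r x).det = 0 :=
    setIntegral_eq_zero_of_forall_eq_zero fun x hx =>
      det_eq_zero_of_eventually_norm_eq_one
        ((hr x (Metric.ball_subset_closedBall hx)).differentiableAt one_ne_zero).hasFDerivAt <| by
          filter_upwards [Metric.isOpen_ball.mem_nhds hx] with y hy
          exact mem_sphere_zero_iff_norm.1 (hsphere (Metric.ball_subset_closedBall hy))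
  have hpos : 0 < (volume : Measure W).real (Metric.ball 0 1) :=
    ENNReal.toReal_pos (Metric.measure_ball_pos volume 0 one_pos).ne' measure_ball_lt_top.ne
  exact hpos.ne (hzero.symm.trans hvol)

end NoRetraction

section SphereExit

variable {W : Type*} [NormedAddCommGroup W] [InnerProductSpace ℝ W]

/-- A quarter of the discriminant of the quadratic equation `‖x + s • u‖ ^ 2 = 1` in `s`. -/
def sphereExitDisc (x u : W) : ℝ := inner ℝ x u ^ 2 + ‖u‖ ^ 2 * (1 - ‖x‖ ^ 2)

/-- The point `x + s • u`, `s` the larger root of `‖x + s • u‖ ^ 2 = 1`, at which the ray from `x`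
in the direction `u` leaves the closed unit ball; it builds the retraction onto the sphere in the
proof of Brouwer's theorem. The value is meaningful only if `u ≠ 0` and `0 ≤ sphereExitDisc x u`. -/
def sphereExit (x u : W) : W := x + ((-inner ℝ x u + √(sphereExitDisc x u)) / ‖u‖ ^ 2) • u

theorem norm_sphereExit {x u : W} (hu : u ≠ 0) (hdisc : 0 ≤ sphereExitDisc x u) :
    ‖sphereExit x u‖ = 1 := by
  have hu2 : ‖u‖ ^ 2 ≠ 0 := pow_ne_zero 2 (norm_ne_zero_iff.2 hu)
  set s : ℝ := (-inner ℝ x u + √(sphereExitDisc x u)) / ‖u‖ ^ 2 with hs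
  have hroot : (s * ‖u‖ ^ 2 + inner ℝ x u) ^ 2 = inner ℝ x u ^ 2 + ‖u‖ ^ 2 * (1 - ‖x‖ ^ 2) := by
    rw [hs, div_mul_cancel₀ _ hu2, neg_add_cancel_comm, Real.sq_sqrt hdisc, sphereExitDisc]
  have hsq : ‖x + s • u‖ ^ 2 = 1 := by
    rw [norm_add_sq_real, inner_smul_right, norm_smul, mul_pow, Real.norm_eq_abs, sq_abs]
    refine mul_left_cancel₀ hu2 ?_
    linear_combination hroot
  exact (pow_eq_one_iff_of_nonneg (norm_nonneg _) two_ne_zero).1 hsq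

theorem sphereExit_of_norm_eq_one {x u : W} (hx : ‖x‖ = 1) (hu : 0 ≤ inner ℝ x u) :
    sphereExit x u = x := by
  simp only [sphereExit, sphereExitDisc, hx, one_pow, sub_self, mul_zero, add_zero,
    Real.sqrt_sq hu, neg_add_cancel, zero_div, zero_smul]

theorem contDiffAt_sphereExit {X : Type*} [NormedAddCommGroup X] [NormedSpace ℝ X] {f g : X → W}
    {n : WithTop ℕ∞} {a : X} (hf : ContDiffAt ℝ n f a) (hg : ContDiffAt ℝ n g a) (hga : g a ≠ 0)
    (hdisc : sphereExitDisc (f a) (g a) ≠ 0) :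
    ContDiffAt ℝ n (fun x => sphereExit (f x) (g x)) a := by
  have hinner : ContDiffAt ℝ n (fun x => inner ℝ (f x) (g x)) a := hf.inner ℝ hg
  have hsq : ContDiffAt ℝ n (fun x => ‖g x‖ ^ 2) a := hg.norm_sq ℝ
  have hD : ContDiffAt ℝ n (fun x => sphereExitDisc (f x) (g x)) a :=
    (hinner.pow 2).add (hsq.mul (contDiffAt_const.sub (hf.norm_sq ℝ)))
  exact hf.add (((hinner.neg.add (hD.sqrt hdisc)).div hsq
    (pow_ne_zero 2 (norm_ne_zero_iff.2 hga))).smul hg)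

theorem inner_sub_pos {x y : W} (hx : ‖x‖ = 1) (hy : ‖y‖ < 1) : 0 < inner ℝ x (x - y) := by
  rw [inner_sub_right, real_inner_self_eq_norm_sq, hx]
  have := real_inner_le_norm x y
  rw [hx] at this
  linarith

theorem sphereExitDisc_sub_pos {x y : W} (hx : ‖x‖ ≤ 1) (hy : ‖y‖ < 1) (hne : x ≠ y) :
    0 < sphereExitDisc x (x - y) := by
  rcases hx.lt_or_eq with hlt | heq
  · have hnorm : 0 < ‖x - y‖ := norm_pos_iff.2 (sub_ne_zero.2 hne)
    have hgap : 0 < 1 - ‖x‖ ^ 2 := by nlinarith [norm_nonneg x]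
    exact add_pos_of_nonneg_of_pos (sq_nonneg _) (by positivity)
  · have := inner_sub_pos heq hy
    simp only [sphereExitDisc, heq, one_pow, sub_self, mul_zero, add_zero]
    positivity

end SphereExit

section Brouwer

variable {W : Type*} [NormedAddCommGroup W] [InnerProductSpace ℝ W] [FiniteDimensional ℝ W]

theorem exists_isFixedPt_of_contDiff {g : W → W} (hg : ContDiff ℝ 1 g) (hnorm : ∀ x, ‖g x‖ < 1) :
    ∃ x, Function.IsFixedPt g x := by
  by_contra! hfix
  have hne (x : W) : x ≠ g x := fun h => hfix x h.symm
  have hdisc (x) (hx : x ∈ Metric.closedBall (0 : W) 1) : 0 < sphereExitDisc x (x - g x) :=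
    sphereExitDisc_sub_pos (mem_closedBall_zero_iff.1 hx) (hnorm x) (hne x)
  refine not_mapsTo_sphere_of_contDiffAt (r := fun x => sphereExit x (x - g x)) (fun x hx => ?_)
    (fun x hx => ?_) fun x hx => ?_
  · exact contDiffAt_sphereExit contDiffAt_id (contDiffAt_id.sub hg.contDiffAt)
      (sub_ne_zero.2 (hne x)) (hdisc x hx).ne'
  · have hx1 : ‖x‖ = 1 := mem_sphere_zero_iff_norm.1 hx
    exact sphereExit_of_norm_eq_one hx1 (inner_sub_pos hx1 (hnorm x)).le
  · exact mem_sphere_zero_iff_norm.2 (norm_sphereExit (sub_ne_zero.2 (hne x)) (hdisc x hx).le)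

theorem exists_norm_sub_le_of_norm_le_one {f : W → W} (hf : Continuous f) (hnorm : ∀ x, ‖f x‖ ≤ 1)
    {ε : ℝ} (hε : 0 < ε) : ∃ x, ‖f x - x‖ ≤ ε := by
  obtain ⟨g, hg, hgf, -⟩ := hf.exists_contDiff_approx 1 (ε := fun _ => ε / 2) continuous_const
    fun _ => half_pos hε
  have hc : 0 < 1 + ε / 2 := by positivity
  have hgnorm (x : W) : ‖g x‖ < 1 + ε / 2 := by
    have := hgf x
    rw [dist_eq_norm] at this
    linarith [norm_le_norm_sub_add (g x) (f x), hnorm x]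
  have hscale (x : W) : ‖(1 + ε / 2)⁻¹ • g x‖ < 1 := by
    rw [norm_smul, norm_inv, Real.norm_of_nonneg hc.le, inv_mul_lt_iff₀ hc, mul_one]
    exact hgnorm x
  obtain ⟨x, hx⟩ := exists_isFixedPt_of_contDiff (contDiff_const.smul hg) hscale
  have hgx : g x = (1 + ε / 2) • x := (inv_smul_eq_iff₀ hc.ne').1 hx
  have hx1 : ‖x‖ < 1 := by rw [← hx.eq]; exact hscale x
  refine ⟨x, ?_⟩
  calc ‖f x - x‖ = ‖(f x - g x) + (ε / 2) • x‖ := by rw [hgx]; congr 1; module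
    _ ≤ ‖f x - g x‖ + ε / 2 * ‖x‖ := by
        refine (norm_add_le _ _).trans_eq ?_
        rw [norm_smul, Real.norm_of_nonneg (half_pos hε).le]
    _ ≤ ε := by
        have := hgf x
        rw [dist_comm, dist_eq_norm] at this
        nlinarith

theorem exists_isFixedPt_of_relativelyCompact {X : Type*} [NormedAddCommGroup X] {f : X → X}
    {K : Set X} (hf : Continuous f) (hK : IsCompact K) (hfK : ∀ x, f x ∈ K)
    (happrox : ∀ ε > 0, ∃ x, ‖f x - x‖ ≤ ε) : ∃ x, Function.IsFixedPt f x := by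
  choose z hz using fun n : ℕ => happrox (1 / ((n : ℝ) + 1)) Nat.one_div_pos_of_nat
  obtain ⟨a, -, ψ, hψ, hlim⟩ := hK.tendsto_subseq fun n => hfK (z n)
  have hdiff : Tendsto (fun n => f (z (ψ n)) - z (ψ n)) atTop (𝓝 0) :=
    squeeze_zero_norm (fun n => hz (ψ n))
      (tendsto_one_div_add_atTop_nhds_zero_nat.comp hψ.tendsto_atTop)
  have hz_lim : Tendsto (fun n => z (ψ n)) atTop (𝓝 a) := by
    simpa only [Function.comp_apply, sub_sub_cancel, sub_zero] using hlim.sub hdiff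
  exact ⟨a, tendsto_nhds_unique ((hf.tendsto a).comp hz_lim) hlim⟩

theorem exists_isFixedPt_of_norm_le_one {f : W → W} (hf : Continuous f) (hnorm : ∀ x, ‖f x‖ ≤ 1) :
    ∃ x, Function.IsFixedPt f x :=
  exists_isFixedPt_of_relativelyCompact hf (isCompact_closedBall 0 1)
    (fun x => mem_closedBall_zero_iff.2 (hnorm x)) fun _ =>
      exists_norm_sub_le_of_norm_le_one hf hnorm

end Brouwer

section Schauder

theorem exists_continuous_partition_of_isCompact {Y : Type*} [MetricSpace Y] {K : Set Y}
    (hK : IsCompact K) {ε : ℝ} (hε : 0 < ε) :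
    ∃ (t : Finset Y) (φ : t → Y → ℝ), (∀ i, Continuous (φ i)) ∧ (∀ i y, 0 ≤ φ i y) ∧
      (∀ y ∈ K, ∑ i, φ i y = 1) ∧ ∀ i y, φ i y ≠ 0 → dist y i < ε := by
  obtain ⟨s, -, hsf, hcover⟩ := hK.finite_cover_balls hε
  lift s to Finset Y using hsf
  have hcover' : K ⊆ ⋃ i : s, Metric.ball (i : Y) ε := fun y hy => by
    obtain ⟨z, hz, hyz⟩ := mem_iUnion₂.1 (hcover hy)
    exact mem_iUnion.2 ⟨⟨z, hz⟩, hyz⟩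
  obtain ⟨p, hp⟩ := PartitionOfUnity.exists_isSubordinate hK.isClosed
    (fun i : s => Metric.ball (i : Y) ε) (fun _ => Metric.isOpen_ball) hcover'
  refine ⟨s, fun i => p i, fun i => (p i).continuous, p.nonneg, fun y hy => ?_, fun i y hy => ?_⟩
  · rw [← finsum_eq_sum_of_fintype]
    exact p.sum_eq_one hy
  · exact hp i (subset_tsupport _ hy)

variable {X : Type*} [NormedAddCommGroup X] [NormedSpace ℝ X]

theorem exists_norm_sub_le_of_relativelyCompact {f : X → X} {K : Set X} (hf : Continuous f)
    (hK : IsCompact K) (hfK : ∀ x, f x ∈ K) {ε : ℝ} (hε : 0 < ε) : ∃ x, ‖f x - x‖ ≤ ε := by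
  obtain ⟨t, φ, hφ, hφ0, hφ1, hφε⟩ := exists_continuous_partition_of_isCompact hK hε
  let comb (w : EuclideanSpace ℝ t) : X := ∑ i, w i • (i : X)
  have hcomb : Continuous comb := by fun_prop
  let g (w : EuclideanSpace ℝ t) : EuclideanSpace ℝ t :=
    WithLp.toLp 2 fun i => φ i (f (comb w))
  have hg : Continuous g :=
    (PiLp.continuous_toLp 2 _).comp (continuous_pi fun i => (hφ i).comp (hf.comp hcomb))
  have hg1 (w) : ‖g w‖ ≤ 1 := by
    have hsum := hφ1 (f (comb w)) (hfK _)
    rw [EuclideanSpace.norm_eq, Real.sqrt_le_one, ← hsum]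
    refine Finset.sum_le_sum fun i _ => ?_
    have hle : φ i (f (comb w)) ≤ 1 := by
      rw [← hsum]
      exact Finset.single_le_sum (fun i _ => hφ0 i _) (Finset.mem_univ i)
    rw [Real.norm_of_nonneg (hφ0 i _)]
    exact pow_le_of_le_one (hφ0 i _) hle two_ne_zero
  obtain ⟨w, hw⟩ := exists_isFixedPt_of_norm_le_one hg hg1
  have hcoord (i : t) : φ i (f (comb w)) = w i := congrArg (fun v => v i) hw.eq
  have hmem : ∑ᶠ i, w i • (i : X) ∈ Metric.ball (f (comb w)) ε := by
    refine (convex_ball (f (comb w)) ε).finsum_mem (fun i => ?_) ?_ fun i hi => ?_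
    · rw [← hcoord]
      exact hφ0 i _
    · simp only [finsum_eq_sum_of_fintype, ← hcoord]
      exact hφ1 _ (hfK _)
    · rw [← hcoord] at hi
      exact Metric.mem_ball'.2 (hφε i _ hi)
  rw [finsum_eq_sum_of_fintype, Metric.mem_ball', dist_eq_norm] at hmem
  exact ⟨comb w, hmem.le⟩

theorem exists_isFixedPt_of_mapsTo_isCompact {f : X → X} {K : Set X} (hf : Continuous f)
    (hK : IsCompact K) (hfK : ∀ x, f x ∈ K) : ∃ x, Function.IsFixedPt f x :=
  exists_isFixedPt_of_relativelyCompact hf hK hfK fun _ =>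
    exists_norm_sub_le_of_relativelyCompact hf hK hfK

/-- The radial retraction of a normed space onto the closed ball of radius `ρ > 0` about `0`. -/
def radialRetraction (ρ : ℝ) (x : X) : X := (ρ / max ρ ‖x‖) • x

theorem continuous_radialRetraction {ρ : ℝ} (hρ : 0 < ρ) :
    Continuous (radialRetraction ρ : X → X) :=
  (continuous_const.div (continuous_const.max continuous_norm)
    fun _ => (lt_max_of_lt_left hρ).ne').smul continuous_id

theorem norm_radialRetraction_le {ρ : ℝ} (hρ : 0 < ρ) (x : X) : ‖radialRetraction ρ x‖ ≤ ρ := by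
  have hmax : 0 < max ρ ‖x‖ := lt_max_of_lt_left hρ
  rw [radialRetraction, norm_smul, Real.norm_of_nonneg (by positivity), div_mul_eq_mul_div,
    div_le_iff₀ hmax]
  exact mul_le_mul_of_nonneg_left (le_max_right _ _) hρ.le

theorem radialRetraction_of_norm_le {ρ : ℝ} (hρ : 0 < ρ) {x : X} (hx : ‖x‖ ≤ ρ) :
    radialRetraction ρ x = x := by
  rw [radialRetraction, max_eq_left hx, div_self hρ.ne', one_smul]

theorem exists_isFixedPt_of_mapsTo_closedBall {f : X → X} {K : Set X} {ρ : ℝ} (hρ : 0 < ρ)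
    (hf : ContinuousOn f (Metric.closedBall 0 ρ))
    (hmaps : MapsTo f (Metric.closedBall 0 ρ) (Metric.closedBall 0 ρ)) (hK : IsCompact K)
    (hfK : MapsTo f (Metric.closedBall 0 ρ) K) : ∃ x, Function.IsFixedPt f x := by
  have hretr (x : X) : radialRetraction ρ x ∈ Metric.closedBall 0 ρ :=
    mem_closedBall_zero_iff.2 (norm_radialRetraction_le hρ x)
  obtain ⟨x, hx⟩ := exists_isFixedPt_of_mapsTo_isCompact
    (hf.comp_continuous (continuous_radialRetraction hρ) hretr) hK fun x => hfK (hretr x)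
  have hball : x ∈ Metric.closedBall 0 ρ := hx ▸ hmaps (hretr x)
  exact ⟨x, by
    rwa [Function.IsFixedPt, Function.comp_apply,
      radialRetraction_of_norm_le hρ (mem_closedBall_zero_iff.1 hball)] at hx⟩

end Schauder

section Krasnoselskii

/-- A completely continuous map: continuous, and mapping bounded sets to relatively compact sets. -/
def IsCompletelyContinuous {X Y : Type*} [PseudoMetricSpace X] [TopologicalSpace Y] (f : X → Y) :
    Prop :=
  Continuous f ∧ ∀ B, Bornology.IsBounded B → IsCompact (closure (f '' B))

namespace IsCompletelyContinuous

theorem continuous_comp {X Y Z : Type*} [PseudoMetricSpace X] [TopologicalSpace Y]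
    [TopologicalSpace Z] [R1Space Z] {f : X → Y} (hf : IsCompletelyContinuous f) {g : Y → Z}
    (hg : Continuous g) : IsCompletelyContinuous (g ∘ f) :=
  ⟨hg.comp hf.1, fun B hB => ((hf.2 B hB).image hg).closure_of_subset <| by
    rw [image_comp]
    exact image_mono subset_closure⟩

theorem sub {X Y : Type*} [PseudoMetricSpace X] [TopologicalSpace Y] [AddGroup Y]
    [IsTopologicalAddGroup Y] {f g : X → Y} (hf : IsCompletelyContinuous f)
    (hg : IsCompletelyContinuous g) : IsCompletelyContinuous fun x => f x - g x := by
  refine ⟨hf.1.sub hg.1, fun B hB =>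
    (((hf.2 B hB).prod (hg.2 B hB)).image continuous_sub).closure_of_subset ?_⟩
  rintro _ ⟨x, hx, rfl⟩
  exact ⟨(f x, g x), ⟨subset_closure (mem_image_of_mem f hx),
    subset_closure (mem_image_of_mem g hx)⟩, rfl⟩

theorem isCompactOperator {X Y : Type*} [NormedAddCommGroup X] [NormedSpace ℝ X]
    [NormedAddCommGroup Y] [NormedSpace ℝ Y] {L : X →L[ℝ] Y} (hL : IsCompletelyContinuous L) :
    IsCompactOperator L :=
  (isCompactOperator_iff_isCompact_closure_image_closedBall (L : X →ₗ[ℝ] Y) one_pos).2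
    (hL.2 _ Metric.isBounded_closedBall)

end IsCompletelyContinuous

variable {X : Type*} [NormedAddCommGroup X] [NormedSpace ℝ X]

theorem exists_isFixedPt_of_norm_le_mul_add {G : X → X} (hG : IsCompletelyContinuous G) {k C : ℝ}
    (hk0 : 0 ≤ k) (hk1 : k < 1) (hbound : ∀ x, ‖G x‖ ≤ k * ‖x‖ + C) :
    ∃ x, Function.IsFixedPt G x := by
  have hgap : 0 < 1 - k := sub_pos.2 hk1
  obtain ⟨ρ, hρ, hC⟩ : ∃ ρ : ℝ, 0 < ρ ∧ C ≤ (1 - k) * ρ :=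
    ⟨|C| / (1 - k) + 1, by positivity, by
      rw [mul_add, mul_div_cancel₀ _ hgap.ne']
      linarith [le_abs_self C]⟩
  refine exists_isFixedPt_of_mapsTo_closedBall hρ hG.1.continuousOn (fun x hx => ?_)
    (hG.2 _ (Metric.isBounded_closedBall (x := 0) (r := ρ)))
    fun x hx => subset_closure (mem_image_of_mem G hx)
  rw [mem_closedBall_zero_iff] at hx ⊢
  calc ‖G x‖ ≤ k * ‖x‖ + C := hbound x
    _ ≤ k * ρ + (1 - k) * ρ := by gcongr
    _ = ρ := by ring

variable [CompleteSpace X]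

theorem isUnit_one_sub_of_isCompactOperator {L : X →L[ℝ] X} (hL : IsCompactOperator L)
    (hker : ∀ x, L x = x → x = 0) : IsUnit (1 - L) := by
  rcases hL.hasEigenvalue_or_mem_resolventSet one_ne_zero with heig | hres
  · obtain ⟨x, hx⟩ := heig.exists_hasEigenvector
    exact absurd (hker x (by simpa using hx.apply_eq_smul)) hx.2
  · simpa only [map_one] using spectrum.mem_resolventSet_iff.1 hres

theorem exists_isFixedPt_of_asymptotically_linear {N : X → X} {L : X →L[ℝ] X}
    (hN : IsCompletelyContinuous N) (hL : IsCompletelyContinuous L)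
    (hker : ∀ x, L x = x → x = 0) (hasym : ∀ ε > 0, ∃ C, ∀ x, ‖N x - L x‖ ≤ ε * ‖x‖ + C) :
    ∃ x, Function.IsFixedPt N x := by
  obtain ⟨u, hu⟩ := isUnit_one_sub_of_isCompactOperator hL.isCompactOperator hker
  let J : X →L[ℝ] X := ↑u⁻¹
  have hJ (x : X) : (1 - L) (J x) = x := by
    rw [← hu]
    exact DFunLike.congr_fun u.mul_inv x
  obtain ⟨C, hC⟩ := hasym (1 / (‖J‖ + 1)) (by positivity)
  have hbound (x : X) : ‖J (N x - L x)‖ ≤ ‖J‖ / (‖J‖ + 1) * ‖x‖ + ‖J‖ * C :=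
    calc ‖J (N x - L x)‖ ≤ ‖J‖ * (1 / (‖J‖ + 1) * ‖x‖ + C) := J.le_opNorm_of_le (hC x)
      _ = _ := by ring
  obtain ⟨x, hx⟩ := exists_isFixedPt_of_norm_le_mul_add
    ((hN.sub hL).continuous_comp J.continuous)
    (by positivity) ((div_lt_one (by positivity)).2 (lt_add_one ‖J‖)) hbound
  have hres := hJ (N x - L x)
  rw [show J (N x - L x) = x from hx] at hres
  exact ⟨x, (sub_left_injective hres).symm⟩

end Krasnoselskii

section Nemytskii

theorem totallyBounded_of_forall_subset_thickening {Y : Type*} [PseudoMetricSpace Y] {s : Set Y}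
    (h : ∀ ε > 0, ∃ t, TotallyBounded t ∧ s ⊆ Metric.thickening ε t) : TotallyBounded s := by
  refine Metric.totallyBounded_iff.2 fun ε hε => ?_
  obtain ⟨t, ht, hst⟩ := h (ε / 2) (half_pos hε)
  obtain ⟨c, hc, htc⟩ := Metric.totallyBounded_iff.1 ht (ε / 2) (half_pos hε)
  refine ⟨c, hc, fun y hy => ?_⟩
  obtain ⟨z, hz, hyz⟩ := Metric.mem_thickening_iff.1 (hst hy)
  obtain ⟨a, ha, hza⟩ := mem_iUnion₂.1 (htc hz)
  refine mem_iUnion₂.2 ⟨a, ha, (dist_triangle y z a).trans_lt ?_⟩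
  linarith [Metric.mem_ball.1 hza]

section PointwiseCompact

variable {X Y E₁ : Type*} [TopologicalSpace X] [TopologicalSpace Y] [TopologicalSpace E₁]

/-- A map on a space of continuous functions is pointwise compact if it sends the functions with
values in a fixed compact set to a relatively compact set. -/
def IsPointwiseCompact (K : C(X, E₁) → Y) : Prop :=
  ∀ C, IsCompact C → IsCompact (closure (K '' {w | ∀ t, w t ∈ C}))

theorem IsPointwiseCompact.continuous_comp {Z : Type*} [TopologicalSpace Z] [R1Space Z]
    {K : C(X, E₁) → Y} (hK : IsPointwiseCompact K) {g : Y → Z} (hg : Continuous g) :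
    IsPointwiseCompact (g ∘ K) := fun C hC =>
  ((hK C hC).image hg).closure_of_subset <| by
    rw [image_comp]
    exact image_mono subset_closure

end PointwiseCompact

variable {X Y E₁ E₂ : Type*} [PseudoMetricSpace X] [CompactSpace X] [TopologicalSpace Y]
  [NormedAddCommGroup E₁] [NormedAddCommGroup E₂]

/-- The Nemytskii (superposition) operator `u ↦ (t ↦ Φ (t, u t))`. -/
def nemytskii (Φ : C(X × E₁, E₂)) (u : C(X, E₁)) : C(X, E₂) :=
  Φ.comp ((ContinuousMap.id X).prodMk u)

theorem continuous_nemytskii (Φ : C(X × E₁, E₂)) : Continuous (nemytskii Φ) :=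
  ContinuousMap.continuous_of_continuous_uncurry _ <|
    Φ.continuous.comp (continuous_snd.prodMk continuous_eval)

theorem exists_norm_le_mul_norm_add {g : X × E₁ → E₂} (hg : IsCompletelyContinuous g) {ε R : ℝ}
    (hε : 0 ≤ ε) (hR : ∀ t x, R ≤ ‖x‖ → ‖g (t, x)‖ ≤ ε * ‖x‖) :
    ∃ C, 0 ≤ C ∧ ∀ t x, ‖g (t, x)‖ ≤ ε * ‖x‖ + C := by
  have hB : Bornology.IsBounded ((univ : Set X) ×ˢ Metric.closedBall (0 : E₁) R) :=
    isCompact_univ.isBounded.prod Metric.isBounded_closedBall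
  obtain ⟨C, hC0, hC⟩ := (hg.2 _ hB).isBounded.exists_pos_norm_le
  refine ⟨C, hC0.le, fun t x => ?_⟩
  rcases le_total R ‖x‖ with hx | hx
  · linarith [hR t x hx]
  · have hgC : ‖g (t, x)‖ ≤ C := hC _ (subset_closure (mem_image_of_mem g
      ⟨mem_univ t, mem_closedBall_zero_iff.2 hx⟩))
    linarith [mul_nonneg hε (norm_nonneg x)]

theorem IsPointwiseCompact.comp_nemytskii [R1Space Y] {K : C(X, E₂) → Y} (hK : IsPointwiseCompact K)
    (hKc : Continuous K) {Φ : C(X × E₁, E₂)} (hΦ : IsCompletelyContinuous Φ) :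
    IsCompletelyContinuous (K ∘ nemytskii Φ) := by
  refine ⟨hKc.comp (continuous_nemytskii Φ), fun B hB => ?_⟩
  obtain ⟨r, hr⟩ := hB.exists_norm_le
  have hbdd : Bornology.IsBounded ((univ : Set X) ×ˢ Metric.closedBall (0 : E₁) r) :=
    isCompact_univ.isBounded.prod Metric.isBounded_closedBall
  refine (hK _ (hΦ.2 _ hbdd)).closure_of_subset ?_
  rw [image_comp]
  refine (image_mono ?_).trans subset_closure
  rintro _ ⟨u, hu, rfl⟩ t
  exact subset_closure (mem_image_of_mem Φ
    ⟨mem_univ t, mem_closedBall_zero_iff.2 ((u.norm_coe_le_norm t).trans (hr u hu))⟩)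

variable [NormedSpace ℝ E₁] [NormedSpace ℝ E₂]

/-- The map `(t, x) ↦ L t x` of a norm-continuous family of bounded operators. -/
def clmFamily (L : C(X, E₁ →L[ℝ] E₂)) : C(X × E₁, E₂) where
  toFun q := L q.1 q.2

/-- The Nemytskii operator of a norm-continuous family of bounded operators, which is linear. -/
def nemytskiiCLM (L : C(X, E₁ →L[ℝ] E₂)) : C(X, E₁) →L[ℝ] C(X, E₂) where
  toFun := nemytskii (clmFamily L)
  map_add' u v := ContinuousMap.ext fun t => map_add (L t) (u t) (v t)
  map_smul' c u := ContinuousMap.ext fun t => map_smul (L t) c (u t)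
  cont := continuous_nemytskii _

theorem isCompletelyContinuous_clm_apply [CompleteSpace E₂] {L : X → E₁ →L[ℝ] E₂}
    (hL : Continuous L) (hcpt : ∀ t, IsCompletelyContinuous (L t)) :
    IsCompletelyContinuous fun q : X × E₁ => L q.1 q.2 := by
  refine ⟨(hL.comp continuous_fst).clm_apply continuous_snd, fun B hB => ?_⟩
  refine (TotallyBounded.closure ?_).isCompact_of_isClosed isClosed_closure
  refine totallyBounded_of_forall_subset_thickening fun ε hε => ?_
  obtain ⟨r, hr, hBr⟩ := hB.image_snd.exists_pos_norm_le
  obtain ⟨c, hcL, hc, hcover⟩ := (isCompact_range hL).finite_cover_balls (div_pos hε hr)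
  refine ⟨⋃ A ∈ c, A '' (Prod.snd '' B), (totallyBounded_biUnion hc).2 fun A hA => ?_, ?_⟩
  · obtain ⟨t, rfl⟩ := hcL hA
    exact ((hcpt t).2 _ hB.image_snd).totallyBounded.subset subset_closure
  · rintro _ ⟨⟨t, x⟩, hq, rfl⟩
    obtain ⟨A, hA, hLA⟩ := mem_iUnion₂.1 (hcover (mem_range_self t))
    have hx : x ∈ Prod.snd '' B := mem_image_of_mem Prod.snd hq
    refine Metric.mem_thickening_iff.2 ⟨A x, mem_biUnion hA (mem_image_of_mem A hx), ?_⟩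
    rw [mem_ball_iff_norm, lt_div_iff₀ hr] at hLA
    calc dist (L t x) (A x) = ‖(L t - A) x‖ := dist_eq_norm _ _
      _ ≤ ‖L t - A‖ * r := (L t - A).le_opNorm_of_le (hBr x hx)
      _ < ε := hLA

theorem exists_comp_nemytskii_eq_self [CompleteSpace E₁] [CompleteSpace E₂]
    {K : C(X, E₂) →L[ℝ] C(X, E₁)} (hK : IsPointwiseCompact K)
    {Φ : C(X × E₁, E₂)} (hΦ : IsCompletelyContinuous Φ)
    {L : C(X, E₁ →L[ℝ] E₂)} (hL : ∀ t, IsCompletelyContinuous (L t))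
    (hker : ∀ u, K (nemytskiiCLM L u) = u → u = 0)
    (hasym : ∀ ε > 0, ∃ R, ∀ t x, R ≤ ‖x‖ → ‖Φ (t, x) - L t x‖ ≤ ε * ‖x‖) :
    ∃ u, K (nemytskii Φ u) = u := by
  have hLfam : IsCompletelyContinuous (clmFamily L) :=
    isCompletelyContinuous_clm_apply L.continuous hL
  refine exists_isFixedPt_of_asymptotically_linear (L := K ∘L nemytskiiCLM L)
    (hK.comp_nemytskii K.continuous hΦ) (hK.comp_nemytskii K.continuous hLfam) hker fun ε hε => ?_
  let δ : ℝ := ε / (‖K‖ + 1)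
  have hδ : 0 < δ := by positivity
  have hKδ : ‖K‖ * δ ≤ ε := by
    rw [mul_div_left_comm]
    exact mul_le_of_le_one_right hε.le ((div_le_one (by positivity)).2 (by linarith))
  obtain ⟨R, hR⟩ := hasym δ hδ
  obtain ⟨C, hC0, hC⟩ := exists_norm_le_mul_norm_add (hΦ.sub hLfam) hδ.le hR
  refine ⟨‖K‖ * C, fun u => ?_⟩
  have hdiff : ‖nemytskii Φ u - nemytskiiCLM L u‖ ≤ δ * ‖u‖ + C := by
    refine (ContinuousMap.norm_le _ (by positivity)).2 fun t => (hC t (u t)).trans ?_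
    gcongr
    exact u.norm_coe_le_norm t
  calc ‖K (nemytskii Φ u) - K (nemytskiiCLM L u)‖
      = ‖K (nemytskii Φ u - nemytskiiCLM L u)‖ := by rw [map_sub]
    _ ≤ ‖K‖ * (δ * ‖u‖ + C) := K.le_opNorm_of_le hdiff
    _ = ‖K‖ * δ * ‖u‖ + ‖K‖ * C := by ring
    _ ≤ ε * ‖u‖ + ‖K‖ * C := by gcongr

end Nemytskii

section StronglyContinuous

variable {X E₁ E₂ : Type*} [TopologicalSpace X] [NormedAddCommGroup E₁] [NormedSpace ℝ E₁]
  [CompleteSpace E₁] [NormedAddCommGroup E₂] [NormedSpace ℝ E₂] {s : Set X} {L : X → E₁ →L[ℝ] E₂}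

theorem exists_norm_le_of_forall_continuousOn_apply (hs : IsCompact s)
    (hL : ∀ x, ContinuousOn (fun p => L p x) s) : ∃ M, 0 ≤ M ∧ ∀ p ∈ s, ‖L p‖ ≤ M := by
  obtain ⟨M, hM⟩ := banach_steinhaus (g := fun p : s => L p) fun x =>
    (hs.exists_bound_of_continuousOn (hL x)).imp fun C hC p => hC p p.2
  exact ⟨max M 0, le_max_right M 0, fun p hp => (hM ⟨p, hp⟩).trans (le_max_left M 0)⟩

theorem continuousOn_prod_of_forall_continuousOn_apply (hs : IsCompact s)
    (hL : ∀ x, ContinuousOn (fun p => L p x) s) :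
    ContinuousOn (fun q : X × E₁ => L q.1 q.2) (s ×ˢ univ) := by
  obtain ⟨M, -, hM⟩ := exists_norm_le_of_forall_continuousOn_apply hs hL
  exact continuousOn_prod_of_continuousOn_lipschitzOnWith' _ M.toNNReal
    (fun p hp => ((L p).lipschitz.weaken (norm_toNNReal.symm.trans_le
      (Real.toNNReal_le_toNNReal (hM p hp)))).lipschitzOnWith) fun x _ => hL x

end StronglyContinuous

theorem isCompact_closure_range_of_equicontinuous {κ X Y : Type*} [TopologicalSpace X]
    [CompactSpace X] [MetricSpace Y] {C : Set Y} (hC : IsCompact C) {F : κ → C(X, Y)}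
    (hFC : ∀ i t, F i t ∈ C) (hF : Equicontinuous fun i => ⇑(F i)) :
    IsCompact (closure (range F)) := by
  let e := ContinuousMap.isometryEquivBoundedOfCompact X Y
  have hbcf : IsCompact (closure (range (e ∘ F))) := by
    refine BoundedContinuousFunction.arzela_ascoli C hC _ ?_ ?_
    · rintro _ t ⟨i, rfl⟩
      exact hFC i t
    · choose i hi using fun f : range (e ∘ F) => f.2
      convert hF.comp i using 2 with f
      rw [← hi f]
      rfl
  refine (hbcf.image e.symm.continuous).closure_of_subset ?_
  rintro _ ⟨i, rfl⟩
  exact ⟨e (F i), subset_closure (mem_range_self i), e.symm_apply_apply (F i)⟩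

section Evolution

theorem norm_integral_apply_le {T : ℝ} {R : ℝ → ℝ → E →L[ℝ] E} {M : ℝ}
    (hM : ∀ p ∈ evolDomain T, ‖R p.1 p.2‖ ≤ M) {w : ℝ → E} {b : ℝ} (hw : ∀ s, ‖w s‖ ≤ b) {r t : ℝ}
    (hr : 0 ≤ r) (hrt : r ≤ t) (ht : t ≤ T) :
    ‖∫ s in r..t, R t s (w s)‖ ≤ M * b * (t - r) := by
  rw [← abs_of_nonneg (sub_nonneg.2 hrt)]
  refine intervalIntegral.norm_integral_le_of_norm_le_const fun s hs => ?_
  rw [uIoc_of_le hrt] at hs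
  exact (R t s).le_of_opNorm_le_of_le (hM (t, s) ⟨hr.trans hs.1.le, hs.2, ht⟩) (hw s)

variable [CompleteSpace E] {T : ℝ} {R : ℝ → ℝ → E →L[ℝ] E}

theorem exists_mem_intervalIntegral_eq_smul {Z : Set E} (hZ : Convex ℝ Z) (hZc : IsClosed Z)
    {f : ℝ → E} {a b : ℝ} (hab : a ≤ b) (hf : ContinuousOn f (Icc a b))
    (hfZ : MapsTo f (Icc a b) Z) : ∃ z ∈ Z, ∫ s in a..b, f s = (b - a) • z := by
  rcases hab.eq_or_lt with rfl | hlt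
  · exact ⟨f a, hfZ (left_mem_Icc.2 le_rfl), by simp⟩
  refine ⟨⨍ s in Ioc a b, f s, ?_, ?_⟩
  · refine hZ.set_average_mem hZc (by simp [hlt]) (by simp) ?_
      ((hf.integrableOn_compact isCompact_Icc).mono_set Ioc_subset_Icc_self)
    filter_upwards [ae_restrict_mem measurableSet_Ioc] with s hs using hfZ (Ioc_subset_Icc_self hs)
  · rw [← uIoc_of_le hab, interval_average_eq, smul_inv_smul₀ (sub_pos.2 hlt).ne']

theorem isCompact_evolDomain (T : ℝ) : IsCompact (evolDomain T) := by
  refine (isCompact_Icc.prod isCompact_Icc : IsCompact (Icc 0 T ×ˢ Icc 0 T)).of_isClosed_subset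
    ((isClosed_le continuous_const continuous_snd).inter
      ((isClosed_le continuous_snd continuous_fst).inter
        (isClosed_le continuous_fst continuous_const))) ?_
  rintro ⟨t, s⟩ ⟨hs, hst, ht⟩
  exact ⟨⟨hs.trans hst, ht⟩, ⟨hs, hst.trans ht⟩⟩

/-- The Duhamel integral `∫₀ᵗ R(t,s) w(s) ds`, the mild solution of the inhomogeneous problem with
forcing `w` that vanishes at time zero. -/
def duhamel (R : ℝ → ℝ → E →L[ℝ] E) (w : ℝ → E) (t : ℝ) : E :=
  ∫ s in (0 : ℝ)..t, R t s (w s)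

namespace IsEvolutionSystem

theorem exists_norm_le (hR : IsEvolutionSystem T R) :
    ∃ M, 0 ≤ M ∧ ∀ p ∈ evolDomain T, ‖R p.1 p.2‖ ≤ M :=
  exists_norm_le_of_forall_continuousOn_apply (L := fun p : ℝ × ℝ => R p.1 p.2)
    (isCompact_evolDomain T) hR.strong_cont

theorem continuousOn_apply (hR : IsEvolutionSystem T R) :
    ContinuousOn (fun q : (ℝ × ℝ) × E => R q.1.1 q.1.2 q.2) (evolDomain T ×ˢ univ) :=
  continuousOn_prod_of_forall_continuousOn_apply (L := fun p : ℝ × ℝ => R p.1 p.2)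
    (isCompact_evolDomain T) hR.strong_cont

theorem continuousOn_integrand (hR : IsEvolutionSystem T R) {w : ℝ → E} (hw : Continuous w) {t : ℝ}
    (ht : t ≤ T) : ContinuousOn (fun s => R t s (w s)) (Icc 0 t) :=
  hR.continuousOn_apply.comp (f := fun s => ((t, s), w s)) (by fun_prop)
    fun _ hs => ⟨⟨hs.1, hs.2, ht⟩, mem_univ _⟩

theorem intervalIntegrable_integrand (hR : IsEvolutionSystem T R) {w : ℝ → E} (hw : Continuous w)
    {a b t : ℝ} (ha : 0 ≤ a) (hab : a ≤ b) (hbt : b ≤ t) (ht : t ≤ T) :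
    IntervalIntegrable (fun s => R t s (w s)) volume a b := by
  refine ContinuousOn.intervalIntegrable ?_
  rw [uIcc_of_le hab]
  exact (hR.continuousOn_integrand hw ht).mono (Icc_subset_Icc ha hbt)

theorem duhamel_eq_apply_duhamel_add (hR : IsEvolutionSystem T R) {w : ℝ → E} (hw : Continuous w)
    {r t : ℝ} (hr : 0 ≤ r) (hrt : r ≤ t) (ht : t ≤ T) :
    duhamel R w t = R t r (duhamel R w r) + ∫ s in r..t, R t s (w s) := by
  have hcomp : R t r (duhamel R w r) = ∫ s in (0 : ℝ)..r, R t s (w s) := by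
    rw [duhamel, ← (R t r).intervalIntegral_comp_comm
      (hR.intervalIntegrable_integrand hw le_rfl hr le_rfl (hrt.trans ht))]
    refine intervalIntegral.integral_congr fun s hs => ?_
    rw [uIcc_of_le hr] at hs
    rw [hR.comp hs.1 hs.2 hrt ht, ContinuousLinearMap.comp_apply]
  rw [hcomp, duhamel, intervalIntegral.integral_add_adjacent_intervals
    (hR.intervalIntegrable_integrand hw le_rfl hr hrt ht)
    (hR.intervalIntegrable_integrand hw hr hrt le_rfl ht)]

theorem exists_isCompact_duhamel_mem (hR : IsEvolutionSystem T R) {C : Set E} (hC : IsCompact C) :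
    ∃ D, IsCompact D ∧ ∀ w : ℝ → E, Continuous w → (∀ s, w s ∈ C) →
      ∀ t ∈ Icc 0 T, duhamel R w t ∈ D := by
  let Z₀ := (fun q : (ℝ × ℝ) × E => R q.1.1 q.1.2 q.2) '' (evolDomain T ×ˢ C)
  have hZ₀ : IsCompact Z₀ := ((isCompact_evolDomain T).prod hC).image_of_continuousOn
    (hR.continuousOn_apply.mono (prod_mono_right (subset_univ C)))
  let Z := closure (convexHull ℝ Z₀)
  have hZ : IsCompact Z := (totallyBounded_convexHull.2
    hZ₀.totallyBounded).closure.isCompact_of_isClosed isClosed_closure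
  refine ⟨(fun q : ℝ × E => q.1 • q.2) '' (Icc 0 T ×ˢ Z),
    (isCompact_Icc.prod hZ).image continuous_smul, fun w hw hwC t ht => ?_⟩
  have hmaps : MapsTo (fun s => R t s (w s)) (Icc 0 t) Z := fun s hs =>
    subset_closure <| subset_convexHull ℝ Z₀
      ⟨((t, s), w s), ⟨⟨hs.1, hs.2, ht.2⟩, hwC s⟩, rfl⟩
  obtain ⟨z, hz, hint⟩ := exists_mem_intervalIntegral_eq_smul
    (convex_convexHull ℝ Z₀).closure isClosed_closure ht.1 (hR.continuousOn_integrand hw ht.2) hmaps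
  rw [sub_zero] at hint
  exact ⟨(t, z), ⟨ht, hz⟩, hint.symm⟩

theorem exists_dist_duhamel_lt (hR : IsEvolutionSystem T R) {C : Set E} (hC : IsCompact C) {ε : ℝ}
    (hε : 0 < ε) : ∃ δ > 0, ∀ w : ℝ → E, Continuous w → (∀ s, w s ∈ C) → ∀ r t : ℝ, 0 ≤ r → r ≤ t →
      t ≤ T → t - r < δ → dist (duhamel R w t) (duhamel R w r) < ε := by
  obtain ⟨D, hD, hmemD⟩ := hR.exists_isCompact_duhamel_mem hC
  obtain ⟨M, hM0, hM⟩ := hR.exists_norm_le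
  obtain ⟨b, hb0, hb⟩ := hC.isBounded.exists_pos_norm_le
  obtain ⟨δ, hδ, hunif⟩ := Metric.uniformContinuousOn_iff.1
    (((isCompact_evolDomain T).prod hD).uniformContinuousOn_of_continuous
      (hR.continuousOn_apply.mono (prod_mono_right (subset_univ D)))) (ε / 2) (half_pos hε)
  refine ⟨min δ (ε / (2 * (M * b + 1))), lt_min hδ (by positivity),
    fun w hw hwC r t hr hrt ht hlt => ?_⟩
  have hrT : r ∈ Icc 0 T := ⟨hr, hrt.trans ht⟩
  have horbit : dist (R t r (duhamel R w r)) (duhamel R w r) < ε / 2 := by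
    have hdist : dist ((t, r), duhamel R w r) ((r, r), duhamel R w r) < δ := by
      simpa [Prod.dist_eq, Real.dist_eq, abs_of_nonneg (sub_nonneg.2 hrt)] using
        ⟨hlt.trans_le (min_le_left _ _), hδ⟩
    simpa [hR.refl r hrT] using hunif _ ⟨⟨hr, hrt, ht⟩, hmemD w hw hwC r hrT⟩ _
      ⟨⟨hr, le_rfl, hrT.2⟩, hmemD w hw hwC r hrT⟩ hdist
  have hforcing : ‖∫ s in r..t, R t s (w s)‖ ≤ ε / 2 :=
    calc ‖∫ s in r..t, R t s (w s)‖ ≤ M * b * (t - r) :=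
          norm_integral_apply_le hM (fun s => hb _ (hwC s)) hr hrt ht
      _ ≤ (M * b + 1) * (ε / (2 * (M * b + 1))) :=
          mul_le_mul (by linarith) (hlt.le.trans (min_le_right _ _)) (sub_nonneg.2 hrt)
            (by positivity)
      _ = ε / 2 := by field_simp
  rw [hR.duhamel_eq_apply_duhamel_add hw hr hrt ht, dist_eq_norm, add_sub_right_comm]
  rw [dist_eq_norm] at horbit
  linarith [norm_add_le (R t r (duhamel R w r) - duhamel R w r) (∫ s in r..t, R t s (w s))]

theorem uniformEquicontinuous_duhamel (hR : IsEvolutionSystem T R) (hT : 0 ≤ T) {C : Set E}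
    (hC : IsCompact C) : UniformEquicontinuous fun (w : {w : C(Icc 0 T, E) // ∀ t, w t ∈ C})
      (t : Icc 0 T) => duhamel R (IccExtend hT w.1) t := by
  refine Metric.uniformEquicontinuous_iff.2 fun ε hε => ?_
  obtain ⟨δ, hδ, hlt⟩ := hR.exists_dist_duhamel_lt hC hε
  refine ⟨δ, hδ, fun r t hrt w => ?_⟩
  have hw : Continuous (IccExtend hT w.1) := w.1.continuous.Icc_extend'
  rw [Subtype.dist_eq, Real.dist_eq, abs_sub_lt_iff] at hrt
  rcases le_total r t with hle | hle
  · rw [dist_comm]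
    exact hlt _ hw (fun s => w.2 _) r t r.2.1 hle t.2.2 hrt.2
  · exact hlt _ hw (fun s => w.2 _) t r t.2.1 hle r.2.2 hrt.1

/-- The orbit map `x ↦ (t ↦ R(t,0) x)`. -/
def orbitCLM (hR : IsEvolutionSystem T R) : E →L[ℝ] C(Icc 0 T, E) :=
  have hcont : Continuous fun q : E × Icc 0 T => R q.2 0 q.1 :=
    hR.continuousOn_apply.comp_continuous
      (f := fun q : E × Icc 0 T => (((q.2 : ℝ), (0 : ℝ)), q.1)) (by fun_prop)
      fun q => ⟨⟨le_rfl, q.2.2.1, q.2.2.2⟩, mem_univ _⟩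
  { toFun := fun x => ⟨fun t => R t 0 x, hcont.comp (Continuous.prodMk_right x)⟩
    map_add' := fun x y => ContinuousMap.ext fun t => map_add (R t 0) x y
    map_smul' := fun c x => ContinuousMap.ext fun t => map_smul (R t 0) c x
    cont := ContinuousMap.continuous_of_continuous_uncurry _ hcont }

/-- The Duhamel integral as a linear map between spaces of continuous functions. -/
def duhamelLinearMap (hR : IsEvolutionSystem T R) (hT : 0 ≤ T) :
    C(Icc 0 T, E) →ₗ[ℝ] C(Icc 0 T, E) where
  toFun w := ⟨fun t => duhamel R (IccExtend hT w) t,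
    ((hR.uniformEquicontinuous_duhamel hT (isCompact_range w.continuous)).uniformContinuous
      ⟨w, mem_range_self⟩).continuous⟩
  map_add' w v := ContinuousMap.ext fun t => by
    have hint (u : C(Icc 0 T, E)) :
        IntervalIntegrable (fun s => R t s (IccExtend hT u s)) volume 0 t :=
      hR.intervalIntegrable_integrand u.continuous.Icc_extend' le_rfl t.2.1 le_rfl t.2.2
    refine Eq.trans ?_ (intervalIntegral.integral_add (hint w) (hint v))
    exact intervalIntegral.integral_congr fun s _ => map_add (R t s) _ _
  map_smul' c w := ContinuousMap.ext fun t => by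
    refine Eq.trans ?_ (intervalIntegral.integral_smul c _)
    exact intervalIntegral.integral_congr fun s _ => map_smul (R t s) c _

/-- The Duhamel integral as a bounded operator on a space of continuous functions. -/
def duhamelCLM (hR : IsEvolutionSystem T R) (hT : 0 ≤ T) : C(Icc 0 T, E) →L[ℝ] C(Icc 0 T, E) :=
  (hR.duhamelLinearMap hT).mkContinuousOfExistsBound <| by
    obtain ⟨M, hM0, hM⟩ := hR.exists_norm_le
    refine ⟨M * T, fun w => (ContinuousMap.norm_le _ (by positivity)).2 fun t => ?_⟩
    calc ‖duhamel R (IccExtend hT w) t‖ ≤ M * ‖w‖ * (t - 0) :=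
          norm_integral_apply_le hM (fun s => w.norm_coe_le_norm _) le_rfl t.2.1 t.2.2
      _ ≤ M * ‖w‖ * T := by
          gcongr
          linarith [t.2.2]
      _ = M * T * ‖w‖ := mul_right_comm M ‖w‖ T

theorem isPointwiseCompact_duhamelCLM (hR : IsEvolutionSystem T R) (hT : 0 ≤ T) :
    IsPointwiseCompact (hR.duhamelCLM hT) := fun C hC => by
  obtain ⟨D, hD, hmemD⟩ := hR.exists_isCompact_duhamel_mem hC
  rw [image_eq_range]
  exact isCompact_closure_range_of_equicontinuous hD
    (fun w t => hmemD _ w.1.continuous.Icc_extend' (fun s => w.2 _) t t.2)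
    (hR.uniformEquicontinuous_duhamel hT hC).equicontinuous

end IsEvolutionSystem

end Evolution

section PeriodicMildSolution

/-- `u` is a mild solution on `[0,T]`, periodic in the sense that `u 0 = u T`, of the semilinear
equation `u' = A(t)u + Φ(t,u)`, where `R` is the evolution system of the family `A(t)`. -/
def IsPeriodicMildSolution (T : ℝ) (R : ℝ → ℝ → E →L[ℝ] E) (Φ : ℝ → E → E) (u : ℝ → E) : Prop :=
  ContinuousOn u (Icc 0 T) ∧
    (∀ t ∈ Icc 0 T, u t = evolMap R (u 0) (fun s => Φ s (u s)) t) ∧ u 0 = u T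

variable {T : ℝ} {R : ℝ → ℝ → E →L[ℝ] E}

theorem IsEvolutionSystem.evolMap_apply_zero (hR : IsEvolutionSystem T R) (hT : 0 ≤ T) (x : E)
    (w : ℝ → E) : evolMap R x w 0 = x := by
  rw [evolMap, intervalIntegral.integral_same, add_zero, hR.refl 0 (left_mem_Icc.2 hT),
    one_apply_eq_self]

theorem evolMap_inverse_one_sub_apply (hunit : IsUnit (1 - R T 0)) (w : ℝ → E) :
    evolMap R (Ring.inverse (1 - R T 0) (duhamel R w T)) w T =
      Ring.inverse (1 - R T 0) (duhamel R w T) := by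
  have hinv := DFunLike.congr_fun (Ring.mul_inverse_cancel _ hunit) (duhamel R w T)
  exact (sub_eq_iff_eq_add'.1 hinv).symm

variable [CompleteSpace E]

namespace IsEvolutionSystem

/-- The solution operator of the inhomogeneous periodic problem: `w` is sent to the orbit of
`(1 - R(T,0))⁻¹ ∫₀ᵀ R(T,s) w(s) ds` plus the Duhamel integral of `w`. `Ring.inverse` has the junk
value `0` unless `1 - R(T,0)` is invertible. -/
def periodicCLM (hR : IsEvolutionSystem T R) (hT : 0 ≤ T) : C(Icc 0 T, E) →L[ℝ] C(Icc 0 T, E) :=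
  (1 + hR.orbitCLM ∘L Ring.inverse (1 - R T 0) ∘L
    ContinuousMap.evalCLM ℝ ⟨T, right_mem_Icc.2 hT⟩) ∘L hR.duhamelCLM hT

theorem isPointwiseCompact_periodicCLM (hR : IsEvolutionSystem T R) (hT : 0 ≤ T) :
    IsPointwiseCompact (hR.periodicCLM hT) := by
  rw [periodicCLM, ContinuousLinearMap.coe_comp]
  exact (hR.isPointwiseCompact_duhamelCLM hT).continuous_comp (ContinuousLinearMap.continuous _)

theorem periodicCLM_apply (hR : IsEvolutionSystem T R) (hT : 0 ≤ T) (w : C(Icc 0 T, E))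
    (t : Icc 0 T) : hR.periodicCLM hT w t =
      evolMap R (Ring.inverse (1 - R T 0) (duhamel R (IccExtend hT w) T)) (IccExtend hT w) t :=
  add_comm (duhamel R (IccExtend hT w) t) _

theorem isPeriodicMildSolution_of_periodicCLM_eq (hR : IsEvolutionSystem T R) (hT : 0 ≤ T)
    (hunit : IsUnit (1 - R T 0)) {Φ : ℝ → E → E} {u w : C(Icc 0 T, E)}
    (hw : ∀ t, w t = Φ t (u t)) (hu : hR.periodicCLM hT w = u) :
    IsPeriodicMildSolution T R Φ (IccExtend hT u) := by
  set x := Ring.inverse (1 - R T 0) (duhamel R (IccExtend hT w) T) with hx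
  have hsol : ∀ t ∈ Icc 0 T, IccExtend hT u t = evolMap R x (IccExtend hT w) t := fun t ht => by
    rw [IccExtend_of_mem hT u ht, ← hu, hR.periodicCLM_apply hT]
  have hzero : IccExtend hT u 0 = x := by
    rw [hsol 0 (left_mem_Icc.2 hT), hR.evolMap_apply_zero hT]
  refine ⟨u.continuous.Icc_extend'.continuousOn, fun t ht => ?_, ?_⟩
  · rw [hsol t ht, hzero, evolMap, evolMap]
    congr 1
    refine intervalIntegral.integral_congr fun s hs => ?_
    rw [uIcc_of_le ht.1] at hs
    have hsT : s ∈ Icc 0 T := ⟨hs.1, hs.2.trans ht.2⟩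
    simp only [IccExtend_of_mem hT _ hsT, hw]
  · rw [hzero, hsol T (right_mem_Icc.2 hT), hx, evolMap_inverse_one_sub_apply hunit]

end IsEvolutionSystem

theorem IsDeterminedEvolSystem.isUnit_one_sub {Abdd : ℝ → V →L[ℝ] E} {ω : ℝ} {j : V →L[ℝ] E}
    (hR : IsDeterminedEvolSystem j T Abdd 1 (-ω) R) (hT : 0 < T) (hω : 0 < ω) :
    IsUnit (1 - R T 0) := by
  refine isUnit_one_sub_of_norm_lt_one ((hR.2.1 0 T le_rfl hT.le le_rfl).trans_lt ?_)
  rw [one_mul, sub_zero, Real.exp_lt_one_iff]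
  exact mul_neg_of_neg_of_pos (neg_neg_of_pos hω) hT

theorem statement_19_general (hT : 0 ≤ T) (hR : IsEvolutionSystem T R)
    (hunit : IsUnit (1 - R T 0)) {F : ℝ → E → E}
    (hFc : ContinuousOn (fun p : ℝ × E => F p.1 p.2) (Icc 0 T ×ˢ univ))
    (hFcpt : ∀ B : Set E, Bornology.IsBounded B →
      IsCompact (closure {y : E | ∃ t ∈ Icc 0 T, ∃ x ∈ B, y = F t x}))
    {Finf : ℝ → E →L[ℝ] E} (hFinfc : ContinuousOn Finf (Icc 0 T))
    (hFinfcpt : ∀ t ∈ Icc 0 T, ∀ B : Set E, Bornology.IsBounded B →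
      IsCompact (closure (Finf t '' B)))
    (hasym : ∀ ε > 0, ∃ r, ∀ x : E, r ≤ ‖x‖ → ∀ t ∈ Icc 0 T, ‖F t x - Finf t x‖ ≤ ε * ‖x‖)
    (hlin : ∀ u, IsPeriodicMildSolution T R (fun t => Finf t) u → ∀ t ∈ Icc 0 T, u t = 0) :
    ∃ u, IsPeriodicMildSolution T R F u := by
  let Φ : C(Icc 0 T × E, E) :=
    ⟨fun q => F q.1 q.2, hFc.comp_continuous (f := fun q : Icc 0 T × E => ((q.1 : ℝ), q.2))
      (by fun_prop) fun q => ⟨q.1.2, mem_univ q.2⟩⟩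
  let L : C(Icc 0 T, E →L[ℝ] E) := ⟨fun t => Finf t, hFinfc.domRestrict⟩
  have hΦ : IsCompletelyContinuous Φ := by
    refine ⟨Φ.continuous, fun B hB => (hFcpt _ hB.image_snd).closure_of_subset ?_⟩
    rintro _ ⟨q, hq, rfl⟩
    exact subset_closure ⟨q.1, q.1.2, q.2, mem_image_of_mem Prod.snd hq, rfl⟩
  have hker : ∀ u, hR.periodicCLM hT (nemytskiiCLM L u) = u → u = 0 := fun u hu =>
    ContinuousMap.ext fun t => by
      have hu0 := hlin _ (hR.isPeriodicMildSolution_of_periodicCLM_eq hT hunit (fun _ => rfl) hu)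
      exact (IccExtend_of_mem hT u t.2).symm.trans (hu0 t t.2)
  obtain ⟨u, hu⟩ := exists_comp_nemytskii_eq_self (hR.isPointwiseCompact_periodicCLM hT) hΦ
    (fun t => ⟨(L t).continuous, hFinfcpt t t.2⟩) hker fun ε hε =>
      (hasym ε hε).imp fun r hr t x hx => hr x hx t t.2
  exact ⟨_, hR.isPeriodicMildSolution_of_periodicCLM_eq hT hunit (fun _ => rfl) hu⟩

end PeriodicMildSolution

/-- Theorem 5: if `F` is completely continuous and asymptotically linear
with compact linear part `F_∞(t)`, the linear periodic problems
`u' = λ(A(t) + F_∞(t))u`, `u(0) = u(T)`, have no nontrivial mild solution for `λ ∈ (0,1]`,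
and `Ker(Â + F̂_∞) = {0}`, then `u' = A(t)u + F(t,u)` admits a `T`-periodic mild solution. -/
theorem statement_19
    {E : Type*} [NormedAddCommGroup E] [NormedSpace ℝ E] [CompleteSpace E]
    [TopologicalSpace.SeparableSpace E]
    {V : Type*} [NormedAddCommGroup V] [NormedSpace ℝ V] [CompleteSpace V]
    (ι : V →L[ℝ] E) (hιinj : Function.Injective ι) (hιdense : DenseRange ι)
    (T : ℝ) (hT : 0 < T)
    (A : HypData E V) (ω MV ωV : ℝ)
    (hgen : HypGen T A)
    (h1 : Hyp1' T A ω)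
    (h2 : Hyp2 ι T A MV ωV)
    (h3 : Hyp3 ι T A)
    (h4 : Hyp4 ι T A ω)
    (h5 : Hyp5 T A)
    -- `F` is completely continuous, satisfies (F1), (F2) and (F4)
    (F : ℝ → E → E)
    (hFc : ContinuousOn (fun p : ℝ × E => F p.1 p.2) (Icc (0 : ℝ) T ×ˢ (univ : Set E)))
    (hFcpt : ∀ B : Set E, Bornology.IsBounded B →
      IsCompact (closure {y : E | ∃ t ∈ Icc (0 : ℝ) T, ∃ x ∈ B, y = F t x}))
    (hF1 : ∀ x : E, ∃ r > (0 : ℝ), ∃ Lc > (0 : ℝ), ∀ t ∈ Icc (0 : ℝ) T,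
      ∀ x₁ ∈ Metric.ball x r, ∀ x₂ ∈ Metric.ball x r, ‖F t x₁ - F t x₂‖ ≤ Lc * ‖x₁ - x₂‖)
    (c : ℝ) (hc : 0 < c)
    (hF2 : ∀ t ∈ Icc (0 : ℝ) T, ∀ x : E, ‖F t x‖ ≤ c * (1 + ‖x‖))
    (hF4 : ∀ x : E, F 0 x = F T x)
    -- the compact linear operators `F_∞(t)`
    (Finf : ℝ → E →L[ℝ] E)
    (hFinfc : ContinuousOn Finf (Icc (0 : ℝ) T))
    (hFinfcpt : ∀ t ∈ Icc (0 : ℝ) T, ∀ B : Set E, Bornology.IsBounded B →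
      IsCompact (closure (Finf t '' B)))
    (hFinfper : Finf 0 = Finf T)
    -- the asymptotic linearity, uniformly in `t ∈ [0,T]`
    (hasym : ∀ ε > (0 : ℝ), ∃ Rr : ℝ, ∀ x : E, Rr ≤ ‖x‖ → ∀ t ∈ Icc (0 : ℝ) T,
      ‖F t x - Finf t x‖ ≤ ε * ‖x‖)
    -- `RR lam` is the evolution system determined by `{λA(t)}`
    (RR : ℝ → ℝ → ℝ → E →L[ℝ] E)
    (hRR : ∀ lam > (0 : ℝ),
      IsDeterminedEvolSystem ι T (fun s => lam • A.bdd s) 1 (-(lam * ω)) (RR lam))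
    -- the linear periodic problems have no nontrivial mild solution for `λ ∈ (0,1]`
    (hlin : ∀ lam : ℝ, 0 < lam → lam ≤ 1 → ∀ u : ℝ → E,
      ContinuousOn u (Icc (0 : ℝ) T) →
      (∀ t ∈ Icc (0 : ℝ) T, u t =
        RR lam t 0 (u 0) + lam • ∫ s in (0 : ℝ)..t, RR lam t s (Finf s (u s))) →
      u 0 = u T → ∀ t ∈ Icc (0 : ℝ) T, u t = 0)
    -- `Ker(Â + F̂_∞) = {0}`
    (hker : ∀ (f : E → E), (∀ v : V, f (ι v) = timeAvg T A v) →
      ∀ (D' : Set E) (A' : E → E), IsClosureOf D' A' (Set.range ι) f →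
        ∀ x ∈ D', A' x + ((1 / T) • ∫ τ in (0 : ℝ)..T, Finf τ) x = 0 → x = 0) :
    ∃ u : ℝ → E, ContinuousOn u (Icc (0 : ℝ) T) ∧
      (∀ t ∈ Icc (0 : ℝ) T, u t =
        RR 1 t 0 (u 0) + ∫ s in (0 : ℝ)..t, RR 1 t s (F s (u s))) ∧
      u 0 = u T :=
  statement_19_general hT.le (hRR 1 one_pos).1
    ((one_mul ω ▸ hRR 1 one_pos).isUnit_one_sub hT h1.1) hFc hFcpt hFinfc hFinfcpt hasym
    fun u hu => hlin 1 one_pos le_rfl u hu.1 (by simpa only [one_smul, evolMap] using hu.2.1) hu.2.2
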